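/- arXiv:1609.04874 — 2 statements merged into one kernel-verified Lean document; each statement's English description precedes it below -/
import Mathlib

section
/- Let G be a group, S and T G-sets, and ρ : ℤ[S] → ℤ[T] a G-equivariant additive homomorphism. Suppose that S has finitely many G-orbits, T has finitely many G-orbits, the stabilizer in G of every element of T is finite, and there is a finite subset F ⊆ ker ρ such that ker ρ is generated as an abelian group by the set {g • f : g ∈ G, f ∈ F}. Then for every natural number n there exists a natural number B such that every x ∈ ker ρ with ‖x‖_S ≤ n can be written as x = ∑_{j=1}^m ε_j (g_j • f_j) with m ≤ B, ε_j ∈ {1, −1}, g_j ∈ G and f_j ∈ F. (Equivalently, the function FV_ρ(n) = sup{‖x‖_K : x ∈ ker ρ, ‖x‖_S ≤ n}, where ‖·‖_K is a filling norm on ker ρ, satisfies FV_ρ(n) < ∞ for all n.) -/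
open Finsupp

/-- Action of `g : G` on the permutation module `ℤ[S]`, permuting the basis. -/
def gact {G S : Type*} [Group G] [MulAction G S] (g : G) (x : S →₀ ℤ) : S →₀ ℤ :=
  Finsupp.equivMapDomain (MulAction.toPerm g) x

/-- The ℓ1-norm on `ℤ[S]`. -/
def l1 {S : Type*} (x : S →₀ ℤ) : ℕ := x.support.sum fun s => (x s).natAbs

/-- `x` is a part of `y`, written `x ⪯_S y`. -/
def IsPart {S : Type*} (x y : S →₀ ℤ) : Prop := ∀ s, x s ^ 2 ≤ x s * y s

/-- `x` and `y` have trivial S-intersection. -/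
def SIntTrivial {S : Type*} (x y : S →₀ ℤ) : Prop := ∀ s, 0 ≤ x s * y s

/-- membership in `D₁ = S ∪ (-S) ⊆ ℤ[S]`. -/
def InD1 {S : Type*} (x : S →₀ ℤ) : Prop :=
  ∃ s, x = Finsupp.single s 1 ∨ x = Finsupp.single s (-1)

/-- `x` and `y` have nontrivial ρ-intersection. -/
def RhoInt {S T : Type*} (ρ : (S →₀ ℤ) →+ (T →₀ ℤ)) (x y : S →₀ ℤ) : Prop :=
  ∃ x₁ y₁, InD1 x₁ ∧ InD1 y₁ ∧ IsPart x₁ x ∧ IsPart y₁ y ∧ ∃ t, ρ x₁ t * ρ y₁ t < 0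

/-- membership in `D_n`. -/
def InD {S T : Type*} (ρ : (S →₀ ℤ) →+ (T →₀ ℤ)) (n : ℕ) (x : S →₀ ℤ) : Prop :=
  ∃ c : ℕ → (S →₀ ℤ), (∀ i < n, InD1 (c i)) ∧ x = ∑ i ∈ Finset.range n, c i ∧
    ∀ k, 1 ≤ k → k < n →
      SIntTrivial (∑ i ∈ Finset.range k, c i) (c k) ∧
      RhoInt ρ (∑ i ∈ Finset.range k, c i) (c k)

/-- `x` is ρ-connected. -/
def RhoConnected {S T : Type*} (ρ : (S →₀ ℤ) →+ (T →₀ ℤ)) (x : S →₀ ℤ) : Prop :=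
  ∃ n, 1 ≤ n ∧ InD ρ n x

/-- `ρ` is G-equivariant. -/
def Equivariant (G : Type*) {S T : Type*} [Group G] [MulAction G S] [MulAction G T]
    (ρ : (S →₀ ℤ) →+ (T →₀ ℤ)) : Prop :=
  ∀ (g : G) (x : S →₀ ℤ), ρ (gact g x) = gact g (ρ x)

/-- `S` has finitely many G-orbits. -/
def FinitelyManyOrbits (G S : Type*) [Group G] [MulAction G S] : Prop :=
  ∃ R : Finset S, ∀ s : S, ∃ (g : G) (r : S), r ∈ R ∧ g • r = s

/-- every element of `T` has finite stabilizer. -/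
def FiniteStabilizers (G T : Type*) [Group G] [MulAction G T] : Prop :=
  ∀ t : T, {g : G | g • t = t}.Finite

/-!
Call two basis elements of `ℤ[S]` linked if `ρ` sends both of them to vectors involving a common
element of `T`. Finiteness of stabilizers makes this relation locally finite. If a subset of the
support of `x ∈ ker ρ` is not linked to the rest of the support, then the part of `x` over that
subset is itself in `ker ρ`. Starting from one point `r` of the support and repeatedly absorbing
linked points produces such a subset after at most `‖x‖₁` rounds, hence inside a finite set that
depends only on `r` and `‖x‖₁`. Up to translation `r` is an orbit representative, so every kernel
element of norm at most `n` is a sum of at most `n` translates of elements of one finite set of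
kernel elements, and each of those has some finite filling.
-/

open scoped Pointwise

section SumsOfBoundedLength

variable {A : Type*} [AddMonoid A] {P : Set A} {x : A} {n : ℕ}

lemma exists_mem_nsmul_insert_zero_of_mem_closure (hx : x ∈ AddSubmonoid.closure P) :
    ∃ n : ℕ, x ∈ n • insert 0 P := by
  induction hx using AddSubmonoid.closure_induction with
  | mem y hy => exact ⟨1, by simp [hy]⟩
  | zero => exact ⟨0, by simp⟩
  | add y z _ _ hy hz =>
    obtain ⟨k, hk⟩ := hy
    obtain ⟨l, hl⟩ := hz
    exact ⟨k + l, add_nsmul (insert 0 P) k l ▸ Set.add_mem_add hk hl⟩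

lemma exists_le_mem_nsmul_of_mem_nsmul_insert_zero (hx : x ∈ n • insert 0 P) :
    ∃ m ≤ n, x ∈ m • P := by
  induction n generalizing x with
  | zero => exact ⟨0, le_rfl, by simpa using hx⟩
  | succ n ih =>
    rw [succ_nsmul] at hx
    obtain ⟨y, hy, z, hz, rfl⟩ := hx
    obtain ⟨m, hmn, hym⟩ := ih hy
    rcases hz with rfl | hz
    · exact ⟨m, by lia, by simpa using hym⟩
    · exact ⟨m + 1, by lia, succ_nsmul P m ▸ Set.add_mem_add hym hz⟩

end SumsOfBoundedLength

section Linked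

variable {S T M N : Type*} [AddCommMonoid M] [AddCommMonoid N]

/-- `s` is incident to `t` if the matrix of `ρ` has a nonzero entry at `(s, t)`, the entry being
the map `a ↦ ρ (single s a) t`. -/
def Incident (ρ : (S →₀ M) →+ (T →₀ N)) (s : S) (t : T) : Prop :=
  ∃ a, ρ (single s a) t ≠ 0

/-- `s` and `s'` are linked if they are incident to a common `t`. Signs are ignored, so this is
coarser than the relation between basis elements that underlies `RhoInt`. -/
def Linked (ρ : (S →₀ M) →+ (T →₀ N)) (s s' : S) : Prop :=
  ∃ t, Incident ρ s t ∧ Incident ρ s' t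

variable {ρ : (S →₀ M) →+ (T →₀ N)} {x : S →₀ M}

lemma map_apply_eq_zero_of_forall_not_incident {t : T} (h : ∀ s ∈ x.support, ¬Incident ρ s t) :
    ρ x t = 0 := by
  rw [← x.sum_single, Finsupp.sum, map_sum, finsetSum_apply]
  exact Finset.sum_eq_zero fun s hs ↦ not_not.1 (not_exists.1 (h s hs) (x s))

lemma map_filter_eq_zero_of_forall_not_linked {p : S → Prop} [DecidablePred p] (hx : ρ x = 0)
    (h : ∀ s, p s → ∀ s' ∈ x.support, ¬p s' → ¬Linked ρ s s') : ρ (x.filter p) = 0 := by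
  ext t
  by_cases hinc : ∃ s, p s ∧ Incident ρ s t
  · obtain ⟨s, hps, hst⟩ := hinc
    have hcompl : ρ (x.filter (¬p ·)) t = 0 := by
      refine map_apply_eq_zero_of_forall_not_incident fun s' hs' hs't ↦ ?_
      rw [support_filter, Finset.mem_filter] at hs'
      exact h s hps s' hs'.1 hs'.2 ⟨t, hst, hs't⟩
    calc ρ (x.filter p) t = ρ (x.filter p) t + ρ (x.filter (¬p ·)) t := by rw [hcompl, add_zero]
      _ = ρ x t := by rw [← Finsupp.add_apply, ← map_add, filter_add_filter_not]
      _ = 0 := by rw [hx, coe_zero, Pi.zero_apply]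
  · refine map_apply_eq_zero_of_forall_not_incident fun s hs hst ↦ hinc ⟨s, ?_, hst⟩
    rw [support_filter, Finset.mem_filter] at hs
    exact hs.2

lemma exists_finset_forall_exists_map_filter_eq_zero [DecidableEq S]
    (hlinked : ∀ s, {s' | Linked ρ s s'}.Finite) (n : ℕ) (A : Finset S) :
    ∃ A' : Finset S, ∀ x, ρ x = 0 → (x.support \ A).card ≤ n →
      ∃ W, A ⊆ W ∧ W ⊆ A' ∧ ρ (x.filter (· ∈ W)) = 0 := by
  induction n generalizing A with
  | zero =>
    refine ⟨A, fun x hx hcard ↦ ⟨A, subset_rfl, subset_rfl, ?_⟩⟩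
    have hsupp : x.support ⊆ A := by simpa [Finset.sdiff_eq_empty_iff_subset] using hcard
    exact map_filter_eq_zero_of_forall_not_linked hx fun _ _ s' hs' hs'A ↦ absurd (hsupp hs') hs'A
  | succ n ih =>
    let neighbours := A.biUnion fun s ↦ (hlinked s).toFinset
    obtain ⟨A', hA'⟩ := ih (A ∪ neighbours)
    refine ⟨A ∪ A', fun x hx hcard ↦ ?_⟩
    by_cases hclosed : ∀ s ∈ A, ∀ s' ∈ x.support, s' ∉ A → ¬Linked ρ s s'
    · exact ⟨A, subset_rfl, Finset.subset_union_left,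
        map_filter_eq_zero_of_forall_not_linked hx hclosed⟩
    · push Not at hclosed
      obtain ⟨s, hsA, s', hs'x, hs'A, hss'⟩ := hclosed
      have hs' : s' ∈ neighbours := Finset.mem_biUnion.2 ⟨s, hsA, by simpa using hss'⟩
      have hlt : (x.support \ (A ∪ neighbours)).card < (x.support \ A).card := by
        refine Finset.card_lt_card (Finset.ssubset_iff_of_subset ?_ |>.2 ⟨s', ?_, ?_⟩)
        · exact Finset.sdiff_subset_sdiff subset_rfl Finset.subset_union_left
        · simp [hs'x, hs'A]
        · simp [hs']
      obtain ⟨W, hAW, hWA', hW⟩ := hA' x hx (by lia)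
      exact ⟨W, Finset.subset_union_left.trans hAW, hWA'.trans Finset.subset_union_right, hW⟩

end Linked

lemma Incident.map_single_one_ne_zero {S T N : Type*} [AddCommGroup N]
    {ρ : (S →₀ ℤ) →+ (T →₀ N)} {s : S} {t : T} (h : Incident ρ s t) : ρ (single s 1) t ≠ 0 := by
  obtain ⟨a, ha⟩ := h
  contrapose! ha
  rw [← mul_one a, ← smul_eq_mul, ← smul_single, map_zsmul, Finsupp.smul_apply, ha, smul_zero]

lemma finite_setOf_linked {S T N : Type*} [AddCommGroup N] {ρ : (S →₀ ℤ) →+ (T →₀ N)}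
    (hfib : ∀ t, {s | ρ (single s 1) t ≠ 0}.Finite) (s : S) : {s' | Linked ρ s s'}.Finite := by
  refine ((ρ (single s 1)).support.finite_toSet.biUnion fun t _ ↦ hfib t).subset ?_
  rintro s' ⟨t, hst, hs't⟩
  exact Set.mem_biUnion (Finset.mem_coe.2 (mem_support_iff.2 hst.map_single_one_ne_zero))
    hs't.map_single_one_ne_zero

section L1

variable {S : Type*}

lemma natAbs_apply_le_l1 (x : S →₀ ℤ) (s : S) : (x s).natAbs ≤ l1 x := by
  by_cases hs : s ∈ x.support
  · exact Finset.single_le_sum (f := fun s ↦ (x s).natAbs) (fun _ _ ↦ Nat.zero_le _) hs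
  · simp [notMem_support_iff.1 hs]

lemma card_support_le_l1 (x : S →₀ ℤ) : x.support.card ≤ l1 x := by
  rw [Finset.card_eq_sum_ones]
  exact Finset.sum_le_sum fun s hs ↦ Int.natAbs_pos.2 (mem_support_iff.1 hs)

lemma l1_filter_add_l1_filter_not (x : S →₀ ℤ) (p : S → Prop) [DecidablePred p] :
    l1 (x.filter p) + l1 (x.filter (¬p ·)) = l1 x := by
  have l1_filter (q : S → Prop) [DecidablePred q] :
      l1 (x.filter q) = ∑ s ∈ x.support with q s, (x s).natAbs :=
    Finset.sum_congr (support_filter q x) fun s hs ↦ by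
      rw [filter_apply_pos q x (Finset.mem_filter.1 hs).2]
  rw [l1_filter, l1_filter, Finset.sum_filter_add_sum_filter_not, l1]

lemma finite_setOf_support_subset_and_l1_le (A : Finset S) (n : ℕ) :
    {x : S →₀ ℤ | x.support ⊆ A ∧ l1 x ≤ n}.Finite := by
  refine (A.finsupp fun _ ↦ Finset.Icc (-n : ℤ) n).finite_toSet.subset ?_
  rintro x ⟨hsupp, hl1⟩
  refine Finset.mem_finsupp_iff.2 ⟨hsupp, fun s _ ↦ Finset.mem_Icc.2 ?_⟩
  have := natAbs_apply_le_l1 x s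
  lia

lemma exists_finset_forall_exists_ker_summand {T N : Type*} [AddCommGroup N]
    {ρ : (S →₀ ℤ) →+ (T →₀ N)} (hlinked : ∀ s, {s' | Linked ρ s s'}.Finite) (n : ℕ) (r : S) :
    ∃ A : Finset S, ∀ x, ρ x = 0 → l1 x ≤ n → x r ≠ 0 →
      ∃ y, ρ y = 0 ∧ y.support ⊆ A ∧ l1 y ≤ n ∧ l1 (x - y) < l1 x := by
  classical
  obtain ⟨A, hA⟩ := exists_finset_forall_exists_map_filter_eq_zero hlinked n {r}
  refine ⟨A, fun x hx hn hr ↦ ?_⟩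
  have hcard : (x.support \ {r}).card ≤ n :=
    (Finset.card_le_card Finset.sdiff_subset).trans ((card_support_le_l1 x).trans hn)
  obtain ⟨W, hrW, hWA, hW⟩ := hA x hx hcard
  have hsub : x - x.filter (· ∈ W) = x.filter (· ∉ W) :=
    sub_eq_of_eq_add' (filter_add_filter_not x (· ∈ W)).symm
  have hl1 := l1_filter_add_l1_filter_not x (· ∈ W)
  have hpos : 0 < l1 (x.filter (· ∈ W)) := by
    refine (Int.natAbs_pos.2 hr).trans_le ?_
    simpa [Finset.singleton_subset_iff.1 hrW] using natAbs_apply_le_l1 (x.filter (· ∈ W)) r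
  refine ⟨x.filter (· ∈ W), hW, fun s hs ↦ hWA ?_, by lia, by rw [hsub]; lia⟩
  rw [support_filter, Finset.mem_filter] at hs
  exact hs.2

end L1

section GroupAction

variable {G S T : Type*} [Group G] [MulAction G S] [MulAction G T]

/-- The action `gact g` of `g` on `ℤ[S]`, bundled as an additive homomorphism. -/
noncomputable def gactHom (g : G) : (S →₀ ℤ) →+ (S →₀ ℤ) :=
  (Finsupp.domCongr (MulAction.toPerm g)).toAddMonoidHom

lemma coe_gactHom (g : G) : ⇑(gactHom g : (S →₀ ℤ) →+ (S →₀ ℤ)) = gact g := rfl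

lemma gact_apply (g : G) (x : S →₀ ℤ) (s : S) : gact g x s = x (g⁻¹ • s) := rfl

lemma gact_gact (g h : G) (x : S →₀ ℤ) : gact g (gact h x) = gact (g * h) x := by
  ext s
  simp only [gact_apply, mul_inv_rev, mul_smul]

lemma gact_gact_inv (g : G) (x : S →₀ ℤ) : gact g (gact g⁻¹ x) = x := by
  ext s
  simp only [gact_apply, inv_inv, smul_inv_smul]

lemma gact_single (g : G) (s : S) (a : ℤ) : gact g (single s a) = single (g • s) a :=
  equivMapDomain_single _ _ _

lemma l1_gact (g : G) (x : S →₀ ℤ) : l1 (gact g x) = l1 x :=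
  sum_equivMapDomain (MulAction.toPerm g) x fun _ a ↦ a.natAbs

lemma Equivariant.map_gact_eq_zero {ρ : (S →₀ ℤ) →+ (T →₀ ℤ)} (hρ : Equivariant G ρ)
    {x : S →₀ ℤ} (hx : ρ x = 0) (g : G) : ρ (gact g x) = 0 := by
  rw [hρ, hx, ← coe_gactHom, map_zero]

lemma FiniteStabilizers.finite_setOf_smul_eq (hstab : FiniteStabilizers G T) (t t' : T) :
    {g : G | g • t = t'}.Finite := by
  rcases {g : G | g • t = t'}.eq_empty_or_nonempty with hempty | ⟨g₀, rfl⟩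
  · exact hempty ▸ Set.finite_empty
  · refine ((hstab t).image (g₀ * ·)).subset fun g hg ↦ ⟨g₀⁻¹ * g, ?_, mul_inv_cancel_left g₀ g⟩
    rw [Set.mem_ofPred_eq] at hg ⊢
    rw [mul_smul, hg, inv_smul_smul]

lemma finite_setOf_map_single_ne_zero {ρ : (S →₀ ℤ) →+ (T →₀ ℤ)} (hρ : Equivariant G ρ)
    (hS : FinitelyManyOrbits G S) (hstab : FiniteStabilizers G T) (t : T) :
    {s | ρ (single s 1) t ≠ 0}.Finite := by
  obtain ⟨R, hR⟩ := hS
  have hfin : (⋃ r ∈ (R : Set S), ⋃ t' ∈ ((ρ (single r 1)).support : Set T),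
      (· • r) '' {g : G | g • t' = t}).Finite :=
    R.finite_toSet.biUnion fun r _ ↦ (Finset.finite_toSet _).biUnion fun t' _ ↦
      (hstab.finite_setOf_smul_eq t' t).image _
  refine hfin.subset fun s hs ↦ ?_
  obtain ⟨g, r, hr, rfl⟩ := hR s
  have ht : g⁻¹ • t ∈ (ρ (single r 1)).support := by
    rwa [Set.mem_ofPred_eq, ← gact_single, hρ, gact_apply, ← mem_support_iff] at hs
  exact Set.mem_biUnion (Finset.mem_coe.2 hr)
    (Set.mem_biUnion (Finset.mem_coe.2 ht) ⟨g, smul_inv_smul g t, rfl⟩)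

variable (G) in
/-- The union of the `G`-orbits of the elements of `F`. -/
def translates (F : Set (S →₀ ℤ)) : Set (S →₀ ℤ) :=
  {y | ∃ (g : G) (f : S →₀ ℤ), f ∈ F ∧ y = gact g f}

lemma gact_mem_translates {F : Set (S →₀ ℤ)} {x : S →₀ ℤ} (hx : x ∈ translates G F) (g : G) :
    gact g x ∈ translates G F := by
  obtain ⟨h, f, hf, rfl⟩ := hx
  exact ⟨g * h, f, hf, gact_gact g h f⟩

lemma exists_finite_ker_forall_exists_translate {ρ : (S →₀ ℤ) →+ (T →₀ ℤ)}
    (hρ : Equivariant G ρ) (hS : FinitelyManyOrbits G S)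
    (hlinked : ∀ s, {s' | Linked ρ s s'}.Finite) (n : ℕ) :
    ∃ E : Set (S →₀ ℤ), E.Finite ∧ (∀ e ∈ E, ρ e = 0) ∧
      ∀ x, ρ x = 0 → l1 x ≤ n → x ≠ 0 → ∃ y ∈ translates G E, ρ y = 0 ∧ l1 (x - y) < l1 x := by
  obtain ⟨R, hR⟩ := hS
  choose A hA using exists_finset_forall_exists_ker_summand hlinked n
  refine ⟨⋃ r ∈ (R : Set S), {y | ρ y = 0 ∧ y.support ⊆ A r ∧ l1 y ≤ n}, ?_, ?_, ?_⟩
  · exact R.finite_toSet.biUnion fun r _ ↦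
      (finite_setOf_support_subset_and_l1_le (A r) n).subset fun _ hy ↦ hy.2
  · simp only [Set.mem_iUnion]
    rintro e ⟨_, _, he, _⟩
    exact he
  · intro x hx hn hx0
    obtain ⟨s, hs⟩ := Finsupp.ne_iff.1 hx0
    obtain ⟨g, r, hr, rfl⟩ := hR s
    obtain ⟨y, hy, hyA, hyn, hlt⟩ := hA r (gact g⁻¹ x) (hρ.map_gact_eq_zero hx g⁻¹)
      (by rwa [l1_gact]) (by rwa [gact_apply, inv_inv])
    refine ⟨gact g y, ⟨g, y, Set.mem_biUnion (Finset.mem_coe.2 hr) ⟨hy, hyA, hyn⟩, rfl⟩,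
      hρ.map_gact_eq_zero hy g, ?_⟩
    have hsub : x - gact g y = gact g (gact g⁻¹ x - y) := by
      rw [← coe_gactHom g, map_sub, coe_gactHom, gact_gact_inv]
    rwa [hsub, l1_gact, ← l1_gact g⁻¹ x]

lemma exists_finite_ker_forall_mem_nsmul {ρ : (S →₀ ℤ) →+ (T →₀ ℤ)}
    (hρ : Equivariant G ρ) (hS : FinitelyManyOrbits G S)
    (hlinked : ∀ s, {s' | Linked ρ s s'}.Finite) (n : ℕ) :
    ∃ E : Set (S →₀ ℤ), E.Finite ∧ (∀ e ∈ E, ρ e = 0) ∧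
      ∀ x, ρ x = 0 → l1 x ≤ n → x ∈ n • insert 0 (translates G E) := by
  obtain ⟨E, hEfin, hEker, hE⟩ := exists_finite_ker_forall_exists_translate hρ hS hlinked n
  refine ⟨E, hEfin, hEker, fun x hx hn ↦ ?_⟩
  suffices hmem : x ∈ l1 x • insert 0 (translates G E) from
    Set.nsmul_subset_nsmul_right (Set.mem_insert _ _) hn hmem
  induction hk : l1 x using Nat.strong_induction_on generalizing x with
  | _ k ih =>
    rcases eq_or_ne x 0 with rfl | hx0
    · exact Set.zero_mem_nsmul (Set.mem_insert _ _)
    obtain ⟨y, hyE, hy, hlt⟩ := hE x hx hn hx0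
    have hrest : x - y ∈ l1 (x - y) • insert 0 (translates G E) :=
      ih _ (hk ▸ hlt) (x - y) (by rw [map_sub, hx, hy, sub_zero]) (by lia) rfl
    have hadd := Set.add_mem_add hrest (Set.mem_insert_of_mem 0 hyE)
    rw [sub_add_cancel, ← succ_nsmul] at hadd
    exact Set.nsmul_subset_nsmul_right (Set.mem_insert _ _) (by lia) hadd

variable (G) in
/-- The ball of radius `n` for the filling norm: the elements of `ℤ[S]` that are sums of at most
`n` signed translates of elements of `F`. Adjoining `0` to the summands turns "exactly `n`" into
"at most `n`". -/
def fillingBall (F : Set (S →₀ ℤ)) (n : ℕ) : Set (S →₀ ℤ) :=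
  n • insert 0 (translates G F ∪ -translates G F)

variable {E F : Set (S →₀ ℤ)} {x : S →₀ ℤ} {n : ℕ}

lemma fillingBall_mono : Monotone (fillingBall G F) :=
  Set.nsmul_right_monotone (Set.mem_insert _ _)

lemma exists_mem_fillingBall_of_mem_closure (hx : x ∈ AddSubgroup.closure (translates G F)) :
    ∃ n, x ∈ fillingBall G F n := by
  rw [← AddSubgroup.mem_toAddSubmonoid, AddSubgroup.closure_toAddSubmonoid] at hx
  exact exists_mem_nsmul_insert_zero_of_mem_closure hx

lemma gact_mem_fillingBall (hx : x ∈ fillingBall G F n) (g : G) :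
    gact g x ∈ fillingBall G F n := by
  have himage : gactHom g '' insert 0 (translates G F ∪ -translates G F) ⊆
      insert 0 (translates G F ∪ -translates G F) := by
    rintro _ ⟨y, rfl | hy | hy, rfl⟩
    · exact .inl (map_zero _)
    · exact .inr (.inl (gact_mem_translates hy g))
    · refine .inr (.inr ?_)
      rw [Set.mem_neg, ← map_neg]
      exact gact_mem_translates hy g
  have hgx := Set.mem_image_of_mem (gactHom g) hx
  rw [fillingBall, Set.image_nsmul] at hgx
  exact Set.nsmul_subset_nsmul_left himage hgx

lemma nsmul_insert_zero_translates_subset_fillingBall {b : ℕ} (hE : E ⊆ fillingBall G F b) :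
    n • insert 0 (translates G E) ⊆ fillingBall G F (b * n) := by
  have hbase : insert 0 (translates G E) ⊆ fillingBall G F b := by
    rintro _ (rfl | ⟨g, e, he, rfl⟩)
    · exact Set.zero_mem_nsmul (Set.mem_insert _ _)
    · exact gact_mem_fillingBall (hE he) g
  rw [fillingBall, mul_nsmul]
  exact Set.nsmul_subset_nsmul_left hbase

lemma exists_eq_sum_of_mem_fillingBall (hx : x ∈ fillingBall G F n) :
    ∃ m : ℕ, m ≤ n ∧ ∃ (ε : Fin m → ℤ) (g : Fin m → G) (f : Fin m → (S →₀ ℤ)),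
      (∀ j, ε j = 1 ∨ ε j = -1) ∧ (∀ j, f j ∈ F) ∧ x = ∑ j, ε j • gact (g j) (f j) := by
  obtain ⟨m, hmn, hxm⟩ := exists_le_mem_nsmul_of_mem_nsmul_insert_zero hx
  obtain ⟨y, rfl⟩ := Set.mem_nsmul.1 hxm
  have hsigned (j : Fin m) : ∃ (ε : ℤ) (g : G) (f : S →₀ ℤ),
      (ε = 1 ∨ ε = -1) ∧ f ∈ F ∧ (y j : S →₀ ℤ) = ε • gact g f := by
    rcases (y j).2 with ⟨g, f, hf, hy⟩ | ⟨g, f, hf, hy⟩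
    · exact ⟨1, g, f, .inl rfl, hf, by rw [hy, one_smul]⟩
    · exact ⟨-1, g, f, .inr rfl, hf, by rw [neg_one_smul, ← hy, neg_neg]⟩
  choose ε g f hε hf hy using hsigned
  exact ⟨m, hmn, ε, g, f, hε, hf, by simp only [List.sum_ofFn, hy]⟩

end GroupAction

theorem stmt_1_general {G S T : Type*} [Group G] [MulAction G S] [MulAction G T]
    (ρ : (S →₀ ℤ) →+ (T →₀ ℤ)) (hρ : Equivariant G ρ) (hS : FinitelyManyOrbits G S)
    (hfib : ∀ t, {s | ρ (single s 1) t ≠ 0}.Finite) (F : Set (S →₀ ℤ))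
    (hgen : ∀ x, ρ x = 0 → x ∈ AddSubgroup.closure (translates G F)) (n : ℕ) :
    ∃ B : ℕ, ∀ x : S →₀ ℤ, ρ x = 0 → l1 x ≤ n →
      ∃ m : ℕ, m ≤ B ∧
        ∃ (ε : Fin m → ℤ) (g : Fin m → G) (f : Fin m → (S →₀ ℤ)),
          (∀ j, ε j = 1 ∨ ε j = -1) ∧ (∀ j, f j ∈ F) ∧
          x = ∑ j, ε j • gact (g j) (f j) := by
  obtain ⟨E, hEfin, hEker, hE⟩ :=
    exists_finite_ker_forall_mem_nsmul hρ hS (finite_setOf_linked hfib) n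
  lift E to Finset (S →₀ ℤ) using hEfin
  obtain ⟨b, hb⟩ : ∃ b, (E : Set (S →₀ ℤ)) ⊆ fillingBall G F b :=
    fillingBall_mono.directed_le.exists_mem_subset_of_finset_subset_biUnion fun e he ↦
      Set.mem_iUnion.2 (exists_mem_fillingBall_of_mem_closure (hgen e (hEker e he)))
  exact ⟨b * n, fun x hx hn ↦ exists_eq_sum_of_mem_fillingBall
    (nsmul_insert_zero_translates_subset_fillingBall hb (hE x hx hn))⟩

/-- Proposition (finiteness of `FV_ρ`): if `S/G` and `T/G` are finite, all
stabilizers of elements of `T` are finite, and `ker ρ` is generated as an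
abelian group by the G-orbit of a finite set `F`, then every kernel element of
ℓ1-norm at most `n` is a sum of a uniformly bounded number of signed
G-translates of elements of `F`. -/
theorem stmt_1 {G S T : Type*} [Group G] [MulAction G S] [MulAction G T]
    (ρ : (S →₀ ℤ) →+ (T →₀ ℤ)) (hρ : Equivariant G ρ)
    (hS : FinitelyManyOrbits G S) (hT : FinitelyManyOrbits G T)
    (hstab : FiniteStabilizers G T)
    (F : Finset (S →₀ ℤ)) (hF : ∀ f ∈ F, ρ f = 0)
    (hgen : ∀ x : S →₀ ℤ, ρ x = 0 →
      x ∈ AddSubgroup.closure {y : S →₀ ℤ | ∃ (g : G) (f : S →₀ ℤ), f ∈ F ∧ y = gact g f}) :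
    ∀ n : ℕ, ∃ B : ℕ, ∀ x : S →₀ ℤ, ρ x = 0 → l1 x ≤ n →
      ∃ m : ℕ, m ≤ B ∧
        ∃ (ε : Fin m → ℤ) (g : Fin m → G) (f : Fin m → (S →₀ ℤ)),
          (∀ j, ε j = 1 ∨ ε j = -1) ∧ (∀ j, f j ∈ F) ∧
          x = ∑ j, ε j • gact (g j) (f j) :=
  stmt_1_general ρ hρ hS (finite_setOf_map_single_ne_zero hρ hS hstab) F hgen
end

section
/- Let G be a group, S and T G-sets, and ρ : ℤ[S] → ℤ[T] a G-equivariant additive homomorphism. For every nonzero z ∈ ker ρ there exist ρ-connected elements x₁, …, x_n ∈ ker ρ such that (1) z = x₁ + ⋯ + x_n, and (2) x_i ⪯_S z for each i. -/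
open Finsupp

/-!
Let `x` be a ρ-connected part of `z ∈ ker ρ`. If `ρ x t ≠ 0` for some `t`, then `z - x` has the
opposite image, so by additivity some signed basis elements which are parts of `x` and of `z - x`
have images of opposite signs at `t`, and the one from `z - x` can be appended to `x`. Hence a
maximal ρ-connected part of `z` lies in the kernel, and splitting it off lowers the ℓ1-norm.
-/

section OrderedRing

variable {R : Type*} [Ring R] [LinearOrder R] [IsStrictOrderedRing R] {a b c : R}

theorem sq_le_mul_iff_mem_uIcc : a ^ 2 ≤ a * b ↔ a ∈ Set.uIcc 0 b := by
  rw [sq, Set.mem_uIcc]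
  rcases lt_trichotomy a 0 with ha | rfl | ha
  · simp [mul_le_mul_left_of_neg ha, ha.le, ha.not_ge]
  · simp [le_total]
  · simp [mul_le_mul_iff_right₀ ha, ha.le, ha.not_ge]

theorem mul_nonneg_of_mem_uIcc (hab : 0 ≤ a * b) (hc : c ∈ Set.uIcc 0 b) : 0 ≤ a * c := by
  rcases Set.mem_uIcc.mp hc with ⟨hc₀, hcb⟩ | ⟨hbc, hc₀⟩ <;> rcases le_total 0 a with ha | ha
  · exact mul_nonneg ha hc₀
  · exact hab.trans (mul_le_mul_of_nonpos_left hcb ha)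
  · exact hab.trans (mul_le_mul_of_nonneg_left hbc ha)
  · exact mul_nonneg_of_nonpos_of_nonpos ha hc₀

end OrderedRing

section Parts

variable {S : Type*} {x y z : S →₀ ℤ}

theorem SIntTrivial.symm (h : SIntTrivial x y) : SIntTrivial y x := fun s ↦ by
  rw [mul_comm]
  exact h s

theorem isPart_iff_mem_uIcc : IsPart x y ↔ ∀ s, x s ∈ Set.uIcc 0 (y s) :=
  forall_congr' fun _ ↦ sq_le_mul_iff_mem_uIcc

theorem isPart_iff_sIntTrivial_sub : IsPart x y ↔ SIntTrivial x (y - x) :=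
  forall_congr' fun s ↦ by rw [Finsupp.sub_apply, mul_sub, sub_nonneg, sq]

theorem IsPart.refl (x : S →₀ ℤ) : IsPart x x := fun s ↦ (sq (x s)).le

theorem IsPart.trans (hxy : IsPart x y) (hyz : IsPart y z) : IsPart x z := by
  rw [isPart_iff_mem_uIcc] at hxy hyz ⊢
  exact fun s ↦ Set.uIcc_subset_uIcc_left (hyz s) (hxy s)

theorem IsPart.sub (h : IsPart x y) : IsPart (y - x) y := by
  rw [isPart_iff_sIntTrivial_sub, sub_sub_cancel]
  exact (isPart_iff_sIntTrivial_sub.mp h).symm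

theorem IsPart.add_of_sub (hx : IsPart x z) (hy : IsPart y (z - x)) : IsPart (x + y) z := by
  have complement_part : IsPart (z - (x + y)) z := by
    rw [← sub_sub]
    exact hy.sub.trans hx.sub
  simpa only [sub_sub_cancel] using complement_part.sub

theorem SIntTrivial.add_ne_zero (h : SIntTrivial x y) (hy : y ≠ 0) : x + y ≠ 0 := by
  intro hxy
  obtain rfl := eq_neg_of_add_eq_zero_left hxy
  refine hy (Finsupp.ext fun s ↦ mul_self_eq_zero.mp (le_antisymm ?_ (mul_self_nonneg _)))
  simpa only [Finsupp.neg_apply, neg_mul, neg_nonneg] using h s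

theorem SIntTrivial.mono_right (hxz : SIntTrivial x z) (hyz : IsPart y z) : SIntTrivial x y :=
  fun s ↦ mul_nonneg_of_mem_uIcc (hxz s) (isPart_iff_mem_uIcc.mp hyz s)

end Parts

section Norm

variable {S : Type*} {x y : S →₀ ℤ}

theorem l1_pos (hx : x ≠ 0) : 0 < l1 x :=
  Finset.sum_pos (fun _ hs ↦ Int.natAbs_pos.mpr (mem_support_iff.mp hs))
    (support_nonempty_iff.mpr hx)

theorem l1_eq_sum_of_support_subset {A : Finset S} (hA : x.support ⊆ A) :
    l1 x = ∑ s ∈ A, (x s).natAbs :=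
  sum_of_support_subset x hA (fun _ n ↦ n.natAbs) fun _ _ ↦ Int.natAbs_zero

theorem SIntTrivial.l1_add (h : SIntTrivial x y) : l1 (x + y) = l1 x + l1 y := by
  classical
  rw [l1_eq_sum_of_support_subset support_add,
    l1_eq_sum_of_support_subset Finset.subset_union_left,
    l1_eq_sum_of_support_subset (x := y) Finset.subset_union_right, ← Finset.sum_add_distrib]
  refine Finset.sum_congr rfl fun s _ ↦ ?_
  rw [Finsupp.add_apply]
  have same_sign := mul_nonneg_iff.mp (h s)
  omega

theorem IsPart.l1_sub_lt (h : IsPart x y) (hx : x ≠ 0) : l1 (y - x) < l1 y := by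
  have l1_split := (isPart_iff_sIntTrivial_sub.mp h).l1_add
  rw [add_sub_cancel] at l1_split
  have := l1_pos hx
  omega

end Norm

section SignedBasis

variable {S : Type*} {x y : S →₀ ℤ}

theorem InD1.ne_zero (hx : InD1 x) : x ≠ 0 := by
  obtain ⟨s, rfl | rfl⟩ := hx <;> simp

theorem inD1_single_sign (s : S) {n : ℤ} (hn : n ≠ 0) : InD1 (single s n.sign) := by
  rcases hn.lt_or_gt with hn | hn
  · exact ⟨s, .inr (by rw [Int.sign_eq_neg_one_of_neg hn])⟩
  · exact ⟨s, .inl (by rw [Int.sign_eq_one_of_pos hn])⟩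

theorem isPart_single_sign (y : S →₀ ℤ) (s : S) : IsPart (single s (y s).sign) y := by
  rw [isPart_iff_mem_uIcc]
  intro t
  rcases eq_or_ne s t with rfl | hst
  · rw [single_eq_same, Set.mem_uIcc]
    rcases lt_trichotomy (y s) 0 with hs | hs | hs
    · rw [Int.sign_eq_neg_one_of_neg hs]
      omega
    · simp [hs]
    · rw [Int.sign_eq_one_of_pos hs]
      omega
  · rw [single_eq_of_ne' hst]
    exact Set.left_mem_uIcc

theorem exists_inD1_isPart (hy : y ≠ 0) : ∃ u, InD1 u ∧ IsPart u y := by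
  obtain ⟨s, hs⟩ := ne_iff.mp hy
  exact ⟨single s (y s).sign, inD1_single_sign s hs, isPart_single_sign y s⟩

theorem sum_natAbs_nsmul_single_sign (y : S →₀ ℤ) :
    (y.sum fun s n ↦ n.natAbs • single s n.sign) = y := by
  simp only [smul_single, nsmul_eq_mul, mul_comm, Int.sign_mul_natAbs, sum_single]

theorem exists_inD1_isPart_map_neg {A : Type*} [AddCommMonoid A] [LinearOrder A]
    [IsOrderedAddMonoid A] (f : (S →₀ ℤ) →+ A) (hy : f y < 0) :
    ∃ u, InD1 u ∧ IsPart u y ∧ f u < 0 := by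
  by_contra! h
  refine hy.not_ge ?_
  rw [← sum_natAbs_nsmul_single_sign y, map_finsuppSum]
  refine Finset.sum_nonneg fun s hs ↦ ?_
  simp only [map_nsmul]
  exact nsmul_nonneg
    (h _ (inD1_single_sign s (mem_support_iff.mp hs)) (isPart_single_sign y s)) _

end SignedBasis

section RhoConnected

variable {S T : Type*} {ρ : (S →₀ ℤ) →+ (T →₀ ℤ)} {x y z u : S →₀ ℤ}

theorem exists_inD1_isPart_rhoInt {t : T} (h : ρ x t * ρ y t < 0) :
    ∃ v, InD1 v ∧ IsPart v y ∧ RhoInt ρ x v := by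
  let coeff : (S →₀ ℤ) →+ ℤ := (applyAddHom t).comp ρ
  obtain ⟨u, hu, hux, hut⟩ :=
    exists_inD1_isPart_map_neg ((AddMonoidHom.mulRight (ρ y t)).comp coeff) h
  obtain ⟨v, hv, hvy, hvt⟩ :=
    exists_inD1_isPart_map_neg ((AddMonoidHom.mulLeft (ρ u t)).comp coeff) hut
  exact ⟨v, hv, hvy, u, v, hu, hv, hux, .refl v, t, hvt⟩

theorem InD1.rhoConnected (hx : InD1 x) : RhoConnected ρ x :=
  ⟨1, le_rfl, fun _ ↦ x, fun _ _ ↦ hx, by simp, fun k hk hk' ↦ absurd hk' hk.not_gt⟩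

theorem RhoConnected.add_of_inD1 (hx : RhoConnected ρ x) (hu : InD1 u)
    (hxu : SIntTrivial x u) (hρ : RhoInt ρ x u) : RhoConnected ρ (x + u) := by
  obtain ⟨n, hn, c, hc, rfl, hstep⟩ := hx
  have sum_update {k : ℕ} (hk : k ≤ n) :
      ∑ i ∈ Finset.range k, Function.update c n u i = ∑ i ∈ Finset.range k, c i :=
    Finset.sum_update_of_notMem (by simpa using hk) c u
  refine ⟨n + 1, by omega, Function.update c n u, fun i hi ↦ ?_, ?_, fun k hk hkn ↦ ?_⟩
  · rcases Nat.lt_succ_iff_lt_or_eq.mp hi with hi | rfl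
    · simpa only [Function.update_of_ne hi.ne] using hc i hi
    · simpa only [Function.update_self] using hu
  · rw [Finset.sum_range_succ, sum_update le_rfl, Function.update_self]
  · rw [sum_update (Nat.lt_succ_iff.mp hkn)]
    rcases Nat.lt_succ_iff_lt_or_eq.mp hkn with hkn | rfl
    · simpa only [Function.update_of_ne hkn.ne] using hstep k hk hkn
    · simpa only [Function.update_self] using And.intro hxu hρ

theorem RhoConnected.ne_zero (hx : RhoConnected ρ x) : x ≠ 0 := by
  obtain ⟨n, hn, c, hc, rfl, hstep⟩ := hx
  obtain ⟨k, rfl⟩ := Nat.exists_eq_add_of_le' hn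
  have last_trivial : SIntTrivial (∑ i ∈ Finset.range k, c i) (c k) := by
    rcases k.eq_zero_or_pos with rfl | hk
    · intro s
      simp
    · exact (hstep k hk k.lt_succ_self).1
  rw [Finset.sum_range_succ]
  exact last_trivial.add_ne_zero (hc k k.lt_succ_self).ne_zero

theorem RhoConnected.exists_add_isPart (hx : RhoConnected ρ x) (hxz : IsPart x z)
    (hz : ρ z = 0) (hρx : ρ x ≠ 0) :
    ∃ u, u ≠ 0 ∧ IsPart u (z - x) ∧ RhoConnected ρ (x + u) := by
  obtain ⟨t, ht⟩ := ne_iff.mp hρx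
  have opposite_signs : ρ x t * ρ (z - x) t < 0 := by
    rw [map_sub, hz, zero_sub, Finsupp.neg_apply, mul_neg, neg_lt_zero]
    exact mul_self_pos.mpr ht
  obtain ⟨u, hu, huz, hxu⟩ := exists_inD1_isPart_rhoInt opposite_signs
  have trivial_int : SIntTrivial x u := (isPart_iff_sIntTrivial_sub.mp hxz).mono_right huz
  exact ⟨u, hu.ne_zero, huz, hx.add_of_inD1 hu trivial_int hxu⟩

theorem exists_rhoConnected_isPart_map_eq_zero (hz : ρ z = 0) (hz₀ : z ≠ 0) :
    ∃ x, RhoConnected ρ x ∧ IsPart x z ∧ ρ x = 0 := by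
  obtain ⟨u, hu, huz⟩ := exists_inD1_isPart hz₀
  obtain ⟨x, ⟨hx, hxz⟩, x_max⟩ := exists_minimalFor_of_wellFoundedLT
    (fun x ↦ RhoConnected ρ x ∧ IsPart x z) (fun x ↦ l1 (z - x)) ⟨u, hu.rhoConnected, huz⟩
  refine ⟨x, hx, hxz, ?_⟩
  by_contra hρx
  obtain ⟨v, hv₀, hvz, hxv⟩ := hx.exists_add_isPart hxz hz hρx
  have l1_lt : l1 (z - (x + v)) < l1 (z - x) := by
    rw [← sub_sub]
    exact hvz.l1_sub_lt hv₀
  exact l1_lt.not_ge (x_max ⟨hxv, hxz.add_of_sub hvz⟩ l1_lt.le)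

end RhoConnected

theorem stmt_4_general {S T : Type*} (ρ : (S →₀ ℤ) →+ (T →₀ ℤ)) (z : S →₀ ℤ) (hz : ρ z = 0) :
    ∃ (n : ℕ) (x : Fin n → (S →₀ ℤ)),
      (∀ i, RhoConnected ρ (x i)) ∧ (∀ i, ρ (x i) = 0) ∧
      z = ∑ i, x i ∧ (∀ i, IsPart (x i) z) := by
  induction hm : l1 z using Nat.strong_induction_on generalizing z with
  | _ m ih =>
    subst hm
    rcases eq_or_ne z 0 with rfl | hz₀
    · exact ⟨0, Fin.elim0, by simp⟩
    obtain ⟨x, hx, hxz, hρx⟩ := exists_rhoConnected_isPart_map_eq_zero hz hz₀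
    obtain ⟨n, w, hw, hρw, hsum, hwz⟩ :=
      ih _ (hxz.l1_sub_lt hx.ne_zero) (z - x) (by rw [map_sub, hz, hρx, sub_zero]) rfl
    refine ⟨n + 1, Fin.cons x w, Fin.cases hx hw, Fin.cases hρx hρw, ?_,
      Fin.cases hxz fun i ↦ (hwz i).trans hxz.sub⟩
    rw [Fin.sum_cons, ← hsum, add_sub_cancel]

/-- Proposition: decomposition of kernel elements into ρ-connected parts. -/
theorem stmt_4 {G S T : Type*} [Group G] [MulAction G S] [MulAction G T]
    (ρ : (S →₀ ℤ) →+ (T →₀ ℤ)) (hρ : Equivariant G ρ)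
    (z : S →₀ ℤ) (hz : ρ z = 0) (hz0 : z ≠ 0) :
    ∃ (n : ℕ) (x : Fin n → (S →₀ ℤ)),
      (∀ i, RhoConnected ρ (x i)) ∧ (∀ i, ρ (x i) = 0) ∧
      z = ∑ i, x i ∧ (∀ i, IsPart (x i) z) := by
  exact stmt_4_general ρ z hz
end
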